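/- Let n ≥ 1, let λ = (λ_1,…,λ_ℓ) be a partition of n, and let N ≥ 1 be a number of variables. Then, as an identity of symmetric polynomials in N variables with rational coefficients, (1/n!) · Σ_{π ∈ S_n} sgn(π) · d_λ(π) · p_{λ(π)} = e_λ, where e_λ = Π_{i=1}^ℓ e_{λ_i}. -/

import Mathlib

/-- `dPart λ π` is the number of ordered tuples `(A_1, …, A_l)` of pairwise disjoint
subsets of `{0, …, n-1}` with union everything, `|A_i| = λ_i`, and each `A_i`
invariant under the permutation `π`. -/
noncomputable def dPart {n l : ℕ} (lam : Fin l → ℕ) (π : Equiv.Perm (Fin n)) : ℕ :=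
  Nat.card {A : Fin l → Finset (Fin n) //
    (∀ i j, i ≠ j → Disjoint (A i) (A j)) ∧
    (Finset.univ.biUnion A = Finset.univ) ∧
    (∀ i, (A i).card = lam i) ∧
    (∀ i, (A i).image π = A i)}

/-- `pPerm N π = p_{λ(π)}`, the product of the power sum polynomials `p_k` in `N`
variables over the cycle lengths `k` (including fixed points) of the permutation `π`. -/
noncomputable def pPerm (N : ℕ) {n : ℕ} (π : Equiv.Perm (Fin n)) :
    MvPolynomial (Fin N) ℚ :=
  ((Equiv.Perm.partition π).parts.map (fun k => MvPolynomial.psum (Fin N) ℚ k)).prod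

/-!
`d_λ(π)` counts the `π`-invariant colorings `c` in which the color `i` is used `λ_i` times, and
`p_{λ(π)}` is the generating function of the `π`-invariant words `f`. So the sum over `π` runs over
pairs `(π, h)`, where `h = (c, f)` is a `π`-invariant function into `{colors} × {variables}`. For a
fixed `h` the signs over the stabilizer of `h` cancel unless `h` is injective, in which case the
stabilizer is trivial. An injective `h` is one of the `n!` enumerations of its image, and the sets
that have `λ_i` elements of each color `i` are generated by `∏ᵢ e_{λᵢ}`.
-/

open Finset Equiv Function MvPolynomial

section Sign

variable {α β : Type*} [DecidableEq α]

lemma comp_swap_eq_self {h : α → β} {a b : α} (hab : h a = h b) : h ∘ swap a b = h := by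
  rw [comp_swap_eq_update, hab, update_eq_self, ← hab, update_eq_self]

variable [Fintype α] [DecidableEq β]

lemma filter_comp_perm_eq_self_of_injective {h : α → β} (hinj : Injective h) :
    ({π | h ∘ π = h} : Finset (Perm α)) = {1} := by
  ext π
  simp only [mem_filter_univ, mem_singleton, hinj.comp_left.eq_iff' (comp_id h), Perm.ext_iff,
    funext_iff, id, Perm.one_apply]

lemma sum_sign_comp_eq_self (h : α → β) [Decidable (Injective h)] :
    ∑ π : Perm α with h ∘ (π : Perm α) = h, (Perm.sign π : ℤ) = if Injective h then 1 else 0 := by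
  split_ifs with hinj
  · simp [filter_comp_perm_eq_self_of_injective hinj]
  · obtain ⟨a, b, hab, hne⟩ := not_injective_iff.mp hinj
    refine sum_involution (fun π _ ↦ swap a b * π) ?_ ?_ ?_ ?_
    · simp [Perm.sign_swap hne]
    · exact fun π _ _ heq ↦ hne (swap_eq_one_iff.mp (mul_eq_right.mp heq))
    · intro π hπ
      rw [mem_filter_univ] at hπ ⊢
      rw [Perm.coe_mul, ← comp_assoc, comp_swap_eq_self hab, hπ]
    · simp

end Sign

section Cycles

variable {α : Type*} [Fintype α] [DecidableEq α] (π : Perm α)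

/-- The cycle of `π` through a point, where the nontrivial cycles are the elements of
`π.cycleFactorsFinset` and each fixed point is a trivial cycle of its own. It indexes the parts of
`π.partition` by the fibers of a function on `α`. -/
def cycleThrough (x : α) : π.cycleFactorsFinset ⊕ {y // π y = y} :=
  if hx : π x = x then .inr ⟨x, hx⟩
  else .inl ⟨π.cycleOf x,
    Perm.cycleOf_mem_cycleFactorsFinset_iff.mpr (Perm.mem_support.mpr hx)⟩

variable {π}

lemma cycleThrough_eq_inl_iff {x : α} {τ : π.cycleFactorsFinset} :
    cycleThrough π x = .inl τ ↔ x ∈ τ.1.support := by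
  obtain ⟨τ, hτ⟩ := τ
  by_cases hx : π x = x
  · have hnot : x ∉ τ.support := fun h ↦
      Perm.mem_support.mp (Perm.mem_cycleFactorsFinset_support_le hτ h) hx
    simp [cycleThrough, hx, hnot]
  · simp only [cycleThrough, hx, dite_false, Sum.inl.injEq, Subtype.mk.injEq]
    refine ⟨?_, fun h ↦ (Perm.cycle_is_cycleOf h hτ).symm⟩
    rintro rfl
    exact (Perm.mem_support_cycleOf_iff' hx).mpr .rfl

lemma cycleThrough_eq_inr_iff {x : α} {y : {y // π y = y}} :
    cycleThrough π x = .inr y ↔ x = y := by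
  by_cases hx : π x = x
  · simp [cycleThrough, hx, Subtype.ext_iff]
  · have hne : x ≠ y := fun h ↦ hx (h ▸ y.2)
    simp [cycleThrough, hx, hne]

lemma cycleThrough_surjective : Surjective (cycleThrough π) := by
  rintro (τ | y)
  · obtain ⟨x, hx⟩ := (Perm.mem_cycleFactorsFinset_iff.mp τ.2).1.nonempty_support
    exact ⟨x, cycleThrough_eq_inl_iff.mpr hx⟩
  · exact ⟨y, cycleThrough_eq_inr_iff.mpr rfl⟩

lemma cycleThrough_eq_iff_sameCycle {x y : α} :
    cycleThrough π x = cycleThrough π y ↔ π.SameCycle x y := by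
  by_cases hy : π y = y
  · rw [show cycleThrough π y = .inr ⟨y, hy⟩ from dif_pos hy, cycleThrough_eq_inr_iff]
    exact ⟨fun h ↦ h ▸ .rfl, fun h ↦ h.eq_of_right hy⟩
  · rw [show cycleThrough π y = .inl _ from dif_neg hy, cycleThrough_eq_inl_iff,
      Perm.mem_support_cycleOf_iff' hy, Perm.sameCycle_comm]

lemma prod_map_parts_partition {M : Type*} [CommMonoid M] (g : ℕ → M) :
    (π.partition.parts.map g).prod = ∏ j, g #{x | cycleThrough π x = j} := by
  have hfixed : Fintype.card α - #π.support = Fintype.card {y // π y = y} := by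
    rw [← card_compl, Fintype.card_subtype]
    congr 1
    ext x
    simp
  simp only [Fintype.prod_sum_type, cycleThrough_eq_inl_iff, cycleThrough_eq_inr_iff,
    filter_univ_mem, filter_eq', mem_univ, if_true, card_singleton, prod_const,
    Perm.parts_partition, Perm.cycleType_def, Multiset.map_add, Multiset.prod_add,
    Multiset.map_map, Multiset.map_replicate, Multiset.prod_replicate, card_univ, ← hfixed]
  rw [prod_coe_sort π.cycleFactorsFinset (fun τ ↦ g #τ.support)]
  rfl

lemma comp_perm_eq_self_iff_factorsThrough {β : Type*} {f : α → β} :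
    f ∘ π = f ↔ f.FactorsThrough (cycleThrough π) := by
  simp only [FactorsThrough, cycleThrough_eq_iff_sameCycle]
  constructor
  · rintro hf x y hxy
    obtain ⟨k, rfl⟩ := hxy.exists_nat_pow_eq
    rw [← Perm.iterate_eq_pow, ← comp_apply (f := f), iterate_invariant hf]
  · exact fun hf ↦ funext fun x ↦ hf (Perm.sameCycle_apply_left.mpr .rfl)

end Cycles

section GeneratingFunctions

variable {α β σ R : Type*} [Fintype α] [DecidableEq α] [Fintype σ]

lemma sum_factorsThrough_prod_eq_prod_sum_pow [Fintype β] [DecidableEq β] [CommSemiring R]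
    {κ : α → β} (hκ : Surjective κ) [DecidablePred fun f : α → σ ↦ f.FactorsThrough κ]
    (w : σ → R) :
    ∑ f : α → σ with f.FactorsThrough κ, ∏ x, w (f x) = ∏ j, ∑ s, w s ^ #{x | κ x = j} := by
  classical
  rw [prod_univ_sum, Fintype.piFinset_univ]
  symm
  refine sum_bij (fun g _ ↦ g ∘ κ) ?_ ?_ ?_ ?_
  · intro g _
    rw [mem_filter_univ]
    exact fun x y hxy ↦ congrArg g hxy
  · exact fun _ _ _ _ h ↦ hκ.injective_comp_right h
  · intro f hf
    rw [mem_filter_univ] at hf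
    refine ⟨f ∘ surjInv hκ, mem_univ _, funext fun x ↦ hf (surjInv_eq hκ (κ x))⟩
  · intro g _
    simp [prod_comp (fun j ↦ w (g j)) κ, image_univ_of_surjective hκ]

lemma psumPart_partition_eq_sum [DecidableEq σ] [CommSemiring R] (π : Perm α) :
    psumPart σ R π.partition = ∑ f : α → σ with f ∘ π = f, ∏ x, X (f x) := by
  classical
  simp only [psumPart, prod_map_parts_partition, psum, comp_perm_eq_self_iff_factorsThrough,
    sum_factorsThrough_prod_eq_prod_sum_pow cycleThrough_surjective]

lemma card_injective_image_eq [Fintype β] [DecidableEq β]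
    [DecidablePred (Injective : (α → β) → Prop)]
    {S : Finset β} (hS : #S = Fintype.card α) :
    #{h : α → β | Injective h ∧ univ.image h = S} = (Fintype.card α).factorial := by
  have himage {h : α → β} (hinj : Injective h) : univ.image h = S ↔ ∀ x, h x ∈ S := by
    refine ⟨fun him x ↦ him ▸ mem_image_of_mem h (mem_univ x), fun hmem ↦ ?_⟩
    refine eq_of_subset_of_card_le (image_subset_iff.mpr fun x _ ↦ hmem x) ?_
    rw [card_image_of_injective _ hinj, hS, card_univ]
  have hcard : #(univ : Finset (α ↪ S)) = (Fintype.card α).factorial := by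
    rw [card_univ, Fintype.card_embedding_eq, Fintype.card_coe, hS, Nat.descFactorial_self]
  rw [← hcard]
  symm
  refine card_bij (fun e _ x ↦ (e x : β)) ?_ ?_ ?_
  · intro e _
    have hinj : Injective fun x ↦ (e x : β) := Subtype.val_injective.comp e.injective
    rw [mem_filter_univ, himage hinj]
    exact ⟨hinj, fun x ↦ (e x).2⟩
  · exact fun e _ e' _ h ↦ DFunLike.ext _ _ fun x ↦ Subtype.ext (congrFun h x)
  · intro h hh
    obtain ⟨hinj, him⟩ := (mem_filter_univ h).mp hh
    exact ⟨⟨fun x ↦ ⟨h x, (himage hinj).mp him x⟩, fun x y hxy ↦ hinj (congrArg Subtype.val hxy)⟩,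
      mem_univ _, rfl⟩

lemma sum_injective_apply_image {M : Type*} [AddCommMonoid M] [Fintype β] [DecidableEq β]
    [DecidablePred (Injective : (α → β) → Prop)] (F : Finset β → M) :
    ∑ h : α → β with Injective h, F (univ.image h) =
      (Fintype.card α).factorial • ∑ S with #S = Fintype.card α, F S := by
  have hmaps (h : α → β) (hh : h ∈ ({h | Injective h} : Finset (α → β))) :
      univ.image h ∈ ({S | #S = Fintype.card α} : Finset (Finset β)) := by
    rw [mem_filter_univ] at hh ⊢
    rw [card_image_of_injective _ hh, card_univ]
  rw [← sum_fiberwise_of_maps_to hmaps, smul_sum]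
  refine sum_congr rfl fun S hS ↦ ?_
  rw [mem_filter_univ] at hS
  rw [sum_congr rfl fun h hh ↦ congrArg F (mem_filter.mp hh).2, sum_const, filter_filter,
    card_injective_image_eq hS]

end GeneratingFunctions

section Colorings

variable {α ι σ R : Type*} [Fintype α] [DecidableEq α] [DecidableEq ι]

lemma image_fibers_eq_iff_comp_eq_self {c : α → ι} {π : Perm α} :
    (∀ i, ({x | c x = i} : Finset α).image π = ({x | c x = i} : Finset α)) ↔ c ∘ π = c := by
  constructor
  · refine fun h ↦ funext fun x ↦ ?_
    have hx : π x ∈ ({y | c y = c x} : Finset α).image π := mem_image_of_mem π (by simp)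
    rw [h] at hx
    simpa using hx
  · intro h i
    refine eq_of_subset_of_card_le (image_subset_iff.mpr fun x hx ↦ ?_)
      (card_image_of_injective _ π.injective).ge
    rw [mem_filter_univ] at hx ⊢
    rw [← hx]
    exact congrFun h x

variable [Fintype ι]

variable (α) in
/-- The colorings of `α` by `ι` that use each color `i` exactly `lam i` times. A coloring `c`
encodes the tuple of disjoint sets `A_i = c⁻¹(i)` with `|A_i| = lam i`. -/
def colorings (lam : ι → ℕ) : Finset (α → ι) :=
  {c | ∀ i, #{x | c x = i} = lam i}

lemma mem_colorings {lam : ι → ℕ} {c : α → ι} :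
    c ∈ colorings α lam ↔ ∀ i, #{x | c x = i} = lam i :=
  mem_filter_univ c

lemma exists_coloring_of_disjoint_of_biUnion_eq_univ {A : ι → Finset α}
    (hdisj : ∀ i j, i ≠ j → Disjoint (A i) (A j)) (hcover : univ.biUnion A = univ) :
    ∃ c : α → ι, (fun i ↦ ({x | c x = i} : Finset α)) = A := by
  have hmem (x : α) : ∃ i, x ∈ A i := by
    simpa using hcover.ge (mem_univ x)
  choose c hc using hmem
  refine ⟨c, funext fun i ↦ ext fun x ↦ ?_⟩
  rw [mem_filter_univ]
  refine ⟨fun h ↦ h ▸ hc x, fun hx ↦ ?_⟩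
  by_contra hne
  exact disjoint_left.mp (hdisj _ _ hne) (hc x) hx

lemma dPart_eq_card_filter_colorings {n l : ℕ} (lam : Fin l → ℕ) (π : Perm (Fin n)) :
    dPart lam π = #{c ∈ colorings (Fin n) lam | c ∘ π = c} := by
  rw [← Fintype.card_coe, ← Nat.card_eq_fintype_card, dPart]
  symm
  refine Nat.card_eq_of_bijective (fun c ↦ ⟨fun i ↦ {x | c.1 x = i}, ?_, ?_, ?_, ?_⟩) ⟨?_, ?_⟩
  · exact fun i j hij ↦ disjoint_filter.mpr fun x _ hi hj ↦ hij (hi.symm.trans hj)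
  · ext x
    simp
  · exact mem_colorings.mp (mem_filter.mp c.2).1
  · exact image_fibers_eq_iff_comp_eq_self.mpr (mem_filter.mp c.2).2
  · intro c c' h
    have hfiber (x : Fin n) := Finset.ext_iff.mp (congrFun (congrArg Subtype.val h) (c.1 x)) x
    refine Subtype.ext (funext fun x ↦ ?_)
    simpa [eq_comm] using hfiber x
  · rintro ⟨A, hdisj, hcover, hcard, hinv⟩
    obtain ⟨c, rfl⟩ := exists_coloring_of_disjoint_of_biUnion_eq_univ hdisj hcover
    exact ⟨⟨c, mem_filter.mpr ⟨mem_colorings.mpr hcard,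
      image_fibers_eq_iff_comp_eq_self.mp hinv⟩⟩, rfl⟩

variable [Fintype σ]

lemma card_filter_colorings_smul_psumPart [DecidableEq σ] [CommSemiring R] (lam : ι → ℕ)
    (π : Perm α) :
    #{c ∈ colorings α lam | c ∘ π = c} • psumPart σ R π.partition =
      ∑ h : α → ι × σ with Prod.fst ∘ h ∈ colorings α lam ∧ h ∘ π = h, ∏ x, X (h x).2 := by
  rw [psumPart_partition_eq_sum, ← sum_const, ← sum_product']
  refine sum_equiv (arrowProdEquivProdArrow α (fun _ ↦ ι) fun _ ↦ σ).symm (fun cf ↦ ?_)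
    fun _ _ ↦ rfl
  simp [funext_iff, arrowProdEquivProdArrow, Prod.ext_iff, forall_and, and_assoc, comp_def]

lemma prod_sum_powersetCard [CommSemiring R] (lam : ι → ℕ) (w : ι → σ → R) :
    ∏ i, ∑ T ∈ powersetCard (lam i) univ, ∏ s ∈ T, w i s =
      ∑ S : Finset (ι × σ) with ∀ i, #{p ∈ S | p.1 = i} = lam i, ∏ p ∈ S, w p.1 p.2 := by
  classical
  have hcard (S : Finset (ι × σ)) (i : ι) : #{s | (i, s) ∈ S} = #{p ∈ S | p.1 = i} := by
    refine card_bij' (fun s _ ↦ (i, s)) (fun p _ ↦ p.2) ?_ ?_ ?_ ?_ <;> aesop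
  rw [prod_univ_sum]
  refine sum_nbij' (fun T ↦ ({p | p.2 ∈ T p.1} : Finset (ι × σ)))
    (fun S i ↦ ({s | (i, s) ∈ S} : Finset σ)) ?_ ?_ ?_ ?_ ?_
  · intro T hT
    simpa [← hcard, mem_powersetCard] using hT
  · intro S hS
    simpa [← hcard, mem_powersetCard] using hS
  · simp
  · simp
  · intro T _
    exact (prod_finset_product' _ _ _ (by simp)).symm

lemma sum_injective_colorings_prod_X [CommSemiring R]
    [DecidablePred (Injective : (α → ι × σ) → Prop)]
    {lam : ι → ℕ} (hlam : ∑ i, lam i = Fintype.card α) :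
    ∑ h : α → ι × σ with Prod.fst ∘ h ∈ colorings α lam ∧ Injective h,
        ∏ x, (X (h x).2 : MvPolynomial σ R) =
      (Fintype.card α).factorial • ∏ i, esymm σ R (lam i) := by
  classical
  let F (S : Finset (ι × σ)) : MvPolynomial σ R :=
    if ∀ i, #{p ∈ S | p.1 = i} = lam i then ∏ p ∈ S, X p.2 else 0
  have hcard {S : Finset (ι × σ)} (hS : ∀ i, #{p ∈ S | p.1 = i} = lam i) :
      #S = Fintype.card α := by
    rw [← hlam, card_eq_sum_card_fiberwise (f := Prod.fst) (t := univ) (by simp)]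
    exact sum_congr rfl fun i _ ↦ hS i
  calc
    _ = ∑ h : α → ι × σ with Injective h, F (univ.image h) := by
      simp_rw [and_comm, ← filter_filter]
      rw [sum_filter]
      refine sum_congr rfl fun h hh ↦ ?_
      have hinj := (mem_filter_univ h).mp hh
      simp only [F, mem_colorings, comp_apply, filter_image, card_image_of_injective _ hinj,
        prod_image hinj.injOn]
    _ = (Fintype.card α).factorial • ∑ S with #S = Fintype.card α, F S :=
      sum_injective_apply_image F
    _ = (Fintype.card α).factorial •
        ∑ S : Finset (ι × σ) with ∀ i, #{p ∈ S | p.1 = i} = lam i, ∏ p ∈ S, X p.2 := by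
      rw [← sum_filter, filter_filter]
      congr! 3 with S
      exact and_iff_right_of_imp hcard
    _ = (Fintype.card α).factorial • ∏ i, esymm σ R (lam i) := by
      simp only [esymm, prod_sum_powersetCard]

theorem average_sgn_dPart_psum_eq_esymm_general [CommRing R] {lam : ι → ℕ}
    (hlam : ∑ i, lam i = Fintype.card α) :
    ∑ π : Perm α, (Perm.sign π : ℤ) •
        #{c ∈ colorings α lam | c ∘ π = c} • psumPart σ R π.partition =
      (Fintype.card α).factorial • ∏ i, esymm σ R (lam i) := by
  classical
  calc
    _ = ∑ π : Perm α, ∑ h : α → ι × σ with Prod.fst ∘ h ∈ colorings α lam,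
        if h ∘ π = h then (Perm.sign π : ℤ) • ∏ x, (X (h x).2 : MvPolynomial σ R) else 0 := by
      simp only [card_filter_colorings_smul_psumPart, smul_sum, ← filter_filter, sum_filter,
        smul_ite, smul_zero]
    _ = ∑ h : α → ι × σ with Prod.fst ∘ h ∈ colorings α lam,
        (∑ π : Perm α with h ∘ (π : Perm α) = h, (Perm.sign π : ℤ)) •
          ∏ x, (X (h x).2 : MvPolynomial σ R) := by
      rw [sum_comm]
      simp only [sum_smul, sum_filter, ite_smul, zero_smul]
    _ = ∑ h : α → ι × σ with Prod.fst ∘ h ∈ colorings α lam ∧ Injective h,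
        ∏ x, (X (h x).2 : MvPolynomial σ R) := by
      simp_rw [sum_sign_comp_eq_self, ite_smul, one_smul, zero_smul]
      rw [← sum_filter, filter_filter]
    _ = (Fintype.card α).factorial • ∏ i, esymm σ R (lam i) :=
      sum_injective_colorings_prod_X hlam

end Colorings

/-- For a partition `λ = (λ_1,…,λ_l) ⊢ n`,
`(1/n!) ∑_{π ∈ S_n} sgn(π) d_λ(π) p_{λ(π)} = e_λ = ∏ᵢ e_{λᵢ}`
as symmetric polynomials in `N` variables over `ℚ`. -/
theorem average_sgn_dPart_psum_eq_esymm (n : ℕ) (hn : 1 ≤ n) (l : ℕ)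
    (lam : Fin l → ℕ) (ha : Antitone lam) (hp : ∀ i, 0 < lam i)
    (hs : ∑ i, lam i = n) (N : ℕ) (hN : 1 ≤ N) :
    (1 / (Nat.factorial n : ℚ)) •
      ∑ π : Equiv.Perm (Fin n),
        (((Equiv.Perm.sign π : ℤ) : ℚ) * (dPart lam π : ℚ)) • pPerm N π
      = ∏ i, MvPolynomial.esymm (Fin N) ℚ (lam i) := by
  rw [one_div, inv_smul_eq_iff₀ (by positivity), Nat.cast_smul_eq_nsmul]
  simpa [mul_smul, dPart_eq_card_filter_colorings, Int.cast_smul_eq_zsmul,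
    Nat.cast_smul_eq_nsmul, pPerm, psumPart] using average_sgn_dPart_psum_eq_esymm_general
      (σ := Fin N) (R := ℚ) (hs.trans (Fintype.card_fin n).symm)
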